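/- Assume the Open Colouring Axiom (OCA). Let φ : P(ℕ) → P(ℕ)/fin be a Boolean-algebra embedding and let 𝒜 be a neat almost disjoint family on ℕ of cardinality ℵ₁. Then for all but countably many A ∈ 𝒜 there are a set D ⊆ ℕ and a function H : D → A such that φ(x) equals the class of H⁻¹[x] in P(ℕ)/fin for every x ⊆ A. -/

import Mathlib

open Set MeasureTheory
open scoped ENNReal

namespace Paper

/-- The Open Colouring Axiom: for every separable metrizable space `X` and every
partition `[X]² = K₀ ∪ K₁` of the unordered pairs with `K₀` open (coded here as a
symmetric open set `K ⊆ X × X` off the diagonal), either there is an uncountable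
`K₀`-homogeneous set, or `X` is a countable union of `K₁`-homogeneous sets. -/
def OCA : Prop :=
  ∀ (X : Type) [MetricSpace X] [TopologicalSpace.SeparableSpace X],
    ∀ K : Set (X × X), IsOpen K → (∀ a b : X, (a, b) ∈ K → (b, a) ∈ K) →
      (∀ a : X, (a, a) ∉ K) →
      (∃ Y : Set X, ¬Y.Countable ∧ ∀ a ∈ Y, ∀ b ∈ Y, a ≠ b → (a, b) ∈ K) ∨
      (∃ Y : ℕ → Set X, (⋃ n, Y n) = Set.univ ∧
        ∀ (n : ℕ), ∀ a ∈ Y n, ∀ b ∈ Y n, a ≠ b → (a, b) ∉ K)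

/-- `X` and `Y` agree modulo a finite set. -/
def AlmostEq {α : Type} (X Y : Set α) : Prop := (symmDiff X Y).Finite

/-- the "equal mod finite" setoid on `Set α` -/
def finSetoid (α : Type) : Setoid (Set α) where
  r X Y := (symmDiff X Y).Finite
  iseqv := by
    constructor
    · intro X; simp
    · intro X Y h; rwa [symmDiff_comm]
    · intro X Y Z h1 h2
      exact (h1.union h2).subset (symmDiff_triangle X Y Z)

/-- the quotient Boolean algebra `P(α)/fin` -/
def PFin (α : Type) : Type := Quotient (finSetoid α)

/-- the class of `X` in `P(α)/fin` -/
def PFin.mk {α : Type} (X : Set α) : PFin α := Quotient.mk (finSetoid α) X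

/-- join in `P(α)/fin` -/
def PFin.sup {α : Type} : PFin α → PFin α → PFin α :=
  Quotient.lift₂ (fun X Y => PFin.mk (X ∪ Y))
    (by
      intro X Y X' Y' hX hY
      refine Quotient.sound ?_
      have hX' : (symmDiff X X').Finite := hX
      have hY' : (symmDiff Y Y').Finite := hY
      show (symmDiff (X ∪ Y) (X' ∪ Y')).Finite
      refine (hX'.union hY').subset ?_
      intro x hx
      simp only [Set.mem_symmDiff, Set.mem_union] at hx ⊢
      tauto)

/-- meet in `P(α)/fin` -/
def PFin.inf {α : Type} : PFin α → PFin α → PFin α :=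
  Quotient.lift₂ (fun X Y => PFin.mk (X ∩ Y))
    (by
      intro X Y X' Y' hX hY
      refine Quotient.sound ?_
      have hX' : (symmDiff X X').Finite := hX
      have hY' : (symmDiff Y Y').Finite := hY
      show (symmDiff (X ∩ Y) (X' ∩ Y')).Finite
      refine (hX'.union hY').subset ?_
      intro x hx
      simp only [Set.mem_symmDiff, Set.mem_inter_iff, Set.mem_union] at hx ⊢
      tauto)

/-- complement in `P(α)/fin` -/
def PFin.compl {α : Type} : PFin α → PFin α :=
  Quotient.lift (fun X => PFin.mk Xᶜ)
    (by
      intro X Y h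
      refine Quotient.sound ?_
      have h' : (symmDiff X Y).Finite := h
      show (symmDiff Xᶜ Yᶜ).Finite
      have e : symmDiff Xᶜ Yᶜ = symmDiff X Y := by
        ext x; simp only [Set.mem_symmDiff, Set.mem_compl_iff]; tauto
      rw [e]; exact h')

/-- bottom of `P(α)/fin` -/
def PFin.bot {α : Type} : PFin α := PFin.mk (∅ : Set α)

/-- top of `P(α)/fin` -/
def PFin.top {α : Type} : PFin α := PFin.mk (Set.univ : Set α)

/-- `φ : P(ℕ) → P(α)/fin` is a Boolean-algebra embedding -/
structure IsEmbeddingPN {α : Type} (φ : Set ℕ → PFin α) : Prop where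
  injective : Function.Injective φ
  map_sup : ∀ a b : Set ℕ, φ (a ∪ b) = PFin.sup (φ a) (φ b)
  map_inf : ∀ a b : Set ℕ, φ (a ∩ b) = PFin.inf (φ a) (φ b)
  map_compl : ∀ a : Set ℕ, φ aᶜ = PFin.compl (φ a)
  map_bot : φ ∅ = PFin.bot
  map_top : φ Set.univ = PFin.top

/-- `Φ` is a lifting of `φ : P(ℕ) → P(α)/fin` -/
def IsLiftingPN {α : Type} (φ : Set ℕ → PFin α) (Φ : Set ℕ → Set α) : Prop :=
  ∀ a, PFin.mk (Φ a) = φ a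

/-!
Let `F` be a lifting of `φ` and let `ℬ` be the family of trees of pairwise disjoint compact sets of
branches. For `b ⊆ B ∈ ℬ` regard `(B, b)` as the indicator of `b` with domain `B`, and `(F B, F b)`
likewise. Apply OCA to these pairs, putting two of them into the open colour if they agree on their
common domain while their images under `F` do not. An uncountable homogeneous set is impossible:
the union of all its `b` restricts to `b` on each of its domains, so `F` of this union makes the
images of any two pairs agree up to a finite set, which can be made the same on an uncountable
subset and then removed. Hence the pairs fall into countably many pieces on which agreement is
preserved. In such a piece, whether `k ∈ F B` lies in `F b` can be read off any second pair that
agrees with `(B, b)` and whose image has `k` in its domain. For all but countably many `B`,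
such second pairs always exist once `b` is suitably prescribed on either half of a partition of
`ℕ`; then `F b ∩ F B` is a continuous function of `b` on each piece. A Baire category argument
turns this into continuity on the subsets of all but finitely many members of any almost disjoint
family below `B`, and a continuous lifting is induced by a point map.

If `φ` were not induced by a point map on uncountably many `A ∈ 𝒜`, their branches would contain
uncountably many disjoint infinite compact sets. Take `ℬ` to be the family of their trees: each of
them contains infinitely many of the bad `A`, a contradiction.
-/

open Filter

variable {ι κ : Type*}

/-- The sets `x` and `y` have the same trace on `S`. -/
def AgreeOn (S x y : Set ι) : Prop := ∀ i ∈ S, (i ∈ x ↔ i ∈ y)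

namespace AgreeOn

variable {S T x y z : Set ι}

lemma refl (S x : Set ι) : AgreeOn S x x := fun _ _ => Iff.rfl

lemma symm (h : AgreeOn S x y) : AgreeOn S y x := fun i hi => (h i hi).symm

lemma trans (h : AgreeOn S x y) (h' : AgreeOn S y z) : AgreeOn S x z :=
  fun i hi => (h i hi).trans (h' i hi)

lemma mono (h : AgreeOn S x y) (hT : T ⊆ S) : AgreeOn T x y := fun i hi => h i (hT hi)

lemma inter_eq (h : AgreeOn S x y) : x ∩ S = y ∩ S := by
  ext i
  exact and_congr_left (h i)

lemma ite_left (S x y : Set ι) : AgreeOn S (S.ite x y) x := fun i hi => by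
  simp only [Set.ite, mem_union, mem_inter_iff, Set.mem_sdiff, hi, and_true, not_true_eq_false,
    and_false, or_false]

lemma ite_right (S x y : Set ι) : AgreeOn Sᶜ (S.ite x y) y := fun i hi => by
  have hi : i ∉ S := hi
  simp only [Set.ite, mem_union, mem_inter_iff, Set.mem_sdiff, hi, and_false, not_false_eq_true,
    and_true, false_or]

end AgreeOn

/-- `F` induces a lattice homomorphism into `P(κ)/fin` that preserves the bottom element. -/
structure IsHomModFin (F : Set ι → Set κ) : Prop where
  inter (a b : Set ι) : ∀ᶠ k in cofinite, (k ∈ F (a ∩ b) ↔ k ∈ F a ∧ k ∈ F b)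
  union (a b : Set ι) : ∀ᶠ k in cofinite, (k ∈ F (a ∪ b) ↔ k ∈ F a ∨ k ∈ F b)
  empty : ∀ᶠ k in cofinite, k ∉ F ∅

namespace IsHomModFin

variable {F : Set ι → Set κ}

lemma disjoint (hF : IsHomModFin F) {a b : Set ι} (h : Disjoint a b) :
    ∀ᶠ k in cofinite, ¬(k ∈ F a ∧ k ∈ F b) := by
  have hab := hF.inter a b
  rw [h.inter_eq] at hab
  filter_upwards [hab, hF.empty] with k h1 h2
  rwa [← h1]

lemma mono (hF : IsHomModFin F) {a b : Set ι} (h : a ⊆ b) :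
    ∀ᶠ k in cofinite, (k ∈ F a → k ∈ F b) := by
  have hab := hF.inter a b
  rw [inter_eq_left.2 h] at hab
  exact hab.mono fun k hk ha => (hk.1 ha).2

lemma mem_iff_of_agreeOn (hF : IsHomModFin F) {A a b : Set ι} (h : AgreeOn A a b) :
    ∀ᶠ k in cofinite, k ∈ F A → (k ∈ F a ↔ k ∈ F b) := by
  have hb := hF.inter b A
  rw [← h.inter_eq] at hb
  filter_upwards [hF.inter a A, hb] with k h1 h2 hkA
  rw [← and_iff_left (a := k ∈ F a) hkA, ← h1, h2, and_iff_left hkA]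

lemma inter_const (hF : IsHomModFin F) (S : Set κ) : IsHomModFin fun x => F x ∩ S where
  inter a b := (hF.inter a b).mono fun k hk => by simp only [mem_inter_iff, hk]; tauto
  union a b := (hF.union a b).mono fun k hk => by simp only [mem_inter_iff, hk]; tauto
  empty := hF.empty.mono fun _ hk h => hk h.1

end IsHomModFin

/-- On subsets of `A`, the map `F` is induced modulo finite sets by a point map from `D ⊆ κ`
to `A`. Only the values of `H` on `D` matter. -/
def SimpleOn (F : Set ι → Set κ) (A : Set ι) : Prop :=
  ∃ (D : Set κ) (H : κ → ι), (∀ p ∈ D, H p ∈ A) ∧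
    ∀ x ⊆ A, ∀ᶠ k in cofinite, (k ∈ F x ↔ k ∈ D ∧ H k ∈ x)

namespace SimpleOn

variable {F : Set ι → Set κ} {A B : Set ι}

lemma mono (h : SimpleOn F A) (hBA : B ⊆ A) : SimpleOn F B := by
  obtain ⟨D, H, -, hDH⟩ := h
  refine ⟨{p ∈ D | H p ∈ B}, H, fun p hp => hp.2, fun x hx => ?_⟩
  filter_upwards [hDH x (hx.trans hBA)] with k hk
  rw [hk]
  exact ⟨fun h => ⟨⟨h.1, hx h.2⟩, h.2⟩, fun h => ⟨h.1.1, h.2⟩⟩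

lemma union_of_disjoint (hF : IsHomModFin F) (hA : SimpleOn F A) (hB : SimpleOn F B)
    (hAB : Disjoint A B) : SimpleOn F (A ∪ B) := by
  classical
  obtain ⟨D, H, hHA, hDH⟩ := hA
  obtain ⟨E, K, hKB, hEK⟩ := hB
  refine ⟨D ∪ E, D.piecewise H K, fun p hp => ?_, fun x hx => ?_⟩
  · by_cases hD : p ∈ D
    · rw [piecewise_eq_of_mem _ _ _ hD]
      exact Or.inl (hHA p hD)
    · rw [piecewise_eq_of_notMem _ _ _ hD]
      exact Or.inr (hKB p (hp.resolve_left hD))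
  · have hsplit := hF.union (x ∩ A) (x ∩ B)
    rw [← inter_union_distrib_left, inter_eq_left.2 hx] at hsplit
    filter_upwards [hsplit, hDH _ inter_subset_right, hEK _ inter_subset_right,
      hF.disjoint hAB, hDH A subset_rfl, hEK B subset_rfl] with k hk hkA hkB hdisj hDA hEB
    have hDE : k ∈ D → k ∉ E := fun hD hE =>
      hdisj ⟨hDA.2 ⟨hD, hHA k hD⟩, hEB.2 ⟨hE, hKB k hE⟩⟩
    rw [hk, hkA, hkB]
    by_cases hD : k ∈ D
    · simp only [piecewise_eq_of_mem _ _ _ hD, mem_union, mem_inter_iff, hD, hDE hD, hHA k hD,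
        true_and, and_true, false_and, or_false]
    · rw [piecewise_eq_of_notMem _ _ _ hD]
      simp only [mem_union, mem_inter_iff, hD, false_and, false_or]
      exact ⟨fun h => ⟨h.1, h.2.1⟩, fun h => ⟨h.1, h.2, hKB k h.1⟩⟩

lemma union (hF : IsHomModFin F) (hA : SimpleOn F A) (hB : SimpleOn F B) :
    SimpleOn F (A ∪ B) := by
  rw [← union_sdiff_self]
  exact hA.union_of_disjoint hF (hB.mono sdiff_subset) disjoint_sdiff_self_right

lemma of_subsingleton [Nonempty ι] (hF : IsHomModFin F) (hA : A.Subsingleton) :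
    SimpleOn F A := by
  rcases hA.eq_empty_or_singleton with rfl | ⟨a, rfl⟩
  · refine ⟨∅, fun _ => Classical.arbitrary ι, fun p hp => hp.elim, fun x hx => ?_⟩
    rw [subset_empty_iff.1 hx]
    exact hF.empty.mono fun k hk => iff_of_false hk fun h => h.2
  · refine ⟨F {a}, fun _ => a, fun _ _ => rfl, fun x hx => ?_⟩
    rcases subset_singleton_iff_eq.1 hx with rfl | rfl
    · exact hF.empty.mono fun k hk => iff_of_false hk fun h => h.2
    · exact Eventually.of_forall fun k => ⟨fun h => ⟨h, rfl⟩, fun h => h.1⟩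

lemma of_finite [Nonempty ι] (hF : IsHomModFin F) (hA : A.Finite) : SimpleOn F A := by
  induction A, hA using Set.Finite.induction_on with
  | empty => exact of_subsingleton hF subsingleton_empty
  | @insert a s _ _ ih => exact (of_subsingleton hF subsingleton_singleton).union hF ih

lemma of_finite_diff [Nonempty ι] (hF : IsHomModFin F) (hB : SimpleOn F B)
    (hfin : (A \ B).Finite) : SimpleOn F A :=
  (hB.union hF (of_finite hF hfin)).mono (by rw [union_sdiff_self]; exact subset_union_right)

end SimpleOn

section Halving

variable {α : Type*} {C : ℕ → Set α}

/-- `U` contains a relatively dense open subset of the box `∏ i, C i`, the factors being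
discrete: any point of the box can be changed beyond any given coordinate so that finitely many
coordinates of the new point force membership in `U`. -/
def ContainsDenseOpen (C : ℕ → Set α) (U : Set (ℕ → α)) : Prop :=
  ∀ x ∈ univ.pi C, ∀ m, ∃ y ∈ univ.pi C, EqOn y x (Iio m) ∧
    ∃ m', ∀ ω ∈ univ.pi C, EqOn ω y (Iio m') → ω ∈ U

lemma exists_block [Finite α] {U : Set (ℕ → α)} (hU : ContainsDenseOpen C U)
    (hC : (univ.pi C).Nonempty) (m : ℕ) :
    ∃ m' ≥ m, ∃ t ∈ univ.pi C, ∀ ω ∈ univ.pi C, EqOn ω t (Ico m m') → ω ∈ U := by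
  classical
  suffices key : ∀ R : Set (Iio m → α), R.Finite → ∃ m' ≥ m, ∃ t ∈ univ.pi C,
      ∀ ω ∈ univ.pi C, (Iio m).domRestrict ω ∈ R → EqOn ω t (Ico m m') → ω ∈ U by
    obtain ⟨m', hm', t, ht, h⟩ := key univ finite_univ
    exact ⟨m', hm', t, ht, fun ω hω => h ω hω (mem_univ _)⟩
  intro R hR
  induction R, hR using Set.Finite.induction_on with
  | empty => exact ⟨m, le_rfl, hC.some, hC.some_mem, fun _ _ h => h.elim⟩
  | @insert ρ R _ _ ih =>
    obtain ⟨m₁, hm₁, t, ht, h₁⟩ := ih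
    by_cases hρ : ∃ ω₀ ∈ univ.pi C, (Iio m).domRestrict ω₀ = ρ
    · obtain ⟨ω₀, hω₀, rfl⟩ := hρ
      obtain ⟨y, hy, hyt, m₂, hm₂⟩ :=
        hU ((Iio m).piecewise ω₀ t) (piecewise_mem_pi _ hω₀ ht) m₁
      refine ⟨max m₁ m₂, le_max_of_le_left hm₁, y, hy, fun ω hω hωR hag => ?_⟩
      rcases hωR with hωρ | hωR
      · refine hm₂ ω hω fun i hi => ?_
        by_cases him : i < m
        · rw [hyt (him.trans_le hm₁), piecewise_eq_of_mem (Iio m) _ _ him]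
          exact domRestrict_eq_domRestrict_iff.1 hωρ him
        · exact hag ⟨not_lt.1 him, lt_max_of_lt_right hi⟩
      · refine h₁ ω hω hωR fun i hi => ?_
        rw [hag ⟨hi.1, lt_max_of_lt_left hi.2⟩, hyt hi.2,
          piecewise_eq_of_notMem (Iio m) _ _ (not_lt.2 hi.1)]
    · refine ⟨m₁, hm₁, t, ht, fun ω hω hωR hag => ?_⟩
      exact h₁ ω hω (hωR.resolve_left fun h => hρ ⟨ω, hω, h⟩) hag

lemma exists_mem_pi_eqOn_of_pairwise_disjoint {P : κ → Set ι} {C : ι → Set α}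
    {s : κ → ι → α} (hP : Pairwise (Function.onFun Disjoint P)) (hC : (univ.pi C).Nonempty)
    (hs : ∀ n, s n ∈ univ.pi C) : ∃ t ∈ univ.pi C, ∀ n, EqOn t (s n) (P n) := by
  have hval : ∀ i, ∃ a ∈ C i, ∀ n, i ∈ P n → a = s n i := by
    intro i
    by_cases hi : ∃ n, i ∈ P n
    · obtain ⟨n, hn⟩ := hi
      refine ⟨s n i, hs n i trivial, fun n' hn' => ?_⟩
      rw [hP.eq (not_disjoint_iff.2 ⟨i, hn, hn'⟩)]
    · exact ⟨hC.some i, hC.some_mem i trivial, fun n hn => (hi ⟨n, hn⟩).elim⟩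
  choose t ht hts using hval
  exact ⟨t, fun i _ => ht i, fun n i hi => hts i n hi⟩

lemma exists_blocks [Finite α] {U : ℕ → Set (ℕ → α)} (hU : ∀ n, ContainsDenseOpen C (U n))
    (hC : (univ.pi C).Nonempty) :
    ∃ m : ℕ → ℕ, Monotone m ∧ ∃ t ∈ univ.pi C, ∀ n, ∀ ω ∈ univ.pi C,
      EqOn ω t (Ico (m n) (m (n + 1))) → ω ∈ U n := by
  choose next hnext s hs hsU using fun n m => exists_block (hU n) hC m
  let m : ℕ → ℕ := fun n => Nat.rec 0 next n
  have hm : Monotone m := monotone_nat_of_le_succ fun n => hnext n (m n)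
  obtain ⟨t, ht, hts⟩ := exists_mem_pi_eqOn_of_pairwise_disjoint
    hm.pairwise_disjoint_on_Ico_succ hC fun n => hs n (m n)
  exact ⟨m, hm, t, ht, fun n ω hω hag => hsU n (m n) ω hω (hag.trans (hts n))⟩

/-- Put the even blocks into `S` and let each requirement be met on an even and on an odd
block. -/
lemma exists_halving [Countable ι] [Finite α] {U : ι → Set (ℕ → α)}
    (hU : ∀ i, ContainsDenseOpen C (U i)) (hC : (univ.pi C).Nonempty) :
    ∃ S : Set ℕ, ∃ t ∈ univ.pi C, ∀ i, ∀ ω ∈ univ.pi C,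
      EqOn ω t S ∨ EqOn ω t Sᶜ → ω ∈ U i := by
  rcases isEmpty_or_nonempty ι with hι | hι
  · exact ⟨∅, hC.some, hC.some_mem, fun i => hι.elim i⟩
  obtain ⟨f, hf⟩ := exists_surjective_nat ι
  obtain ⟨m, hm, t, ht, hmt⟩ := exists_blocks (fun n => hU (f (n / 2))) hC
  refine ⟨⋃ n, Ico (m (2 * n)) (m (2 * n + 1)), t, ht, fun i ω hω hag => ?_⟩
  obtain ⟨n, rfl⟩ := hf i
  rcases hag with hag | hag
  · have hU' := hmt (2 * n) ω hω
      (hag.mono (subset_iUnion (fun n => Ico (m (2 * n)) (m (2 * n + 1))) n))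
    rwa [Nat.mul_div_cancel_left n two_pos] at hU'
  · have hodd : Ico (m (2 * n + 1)) (m (2 * n + 2)) ⊆
        (⋃ n, Ico (m (2 * n)) (m (2 * n + 1)))ᶜ :=
      subset_compl_iff_disjoint_right.2 <| disjoint_iUnion_right.2 fun j =>
        hm.pairwise_disjoint_on_Ico_succ (show 2 * n + 1 ≠ 2 * j by omega)
    have hU' := hmt (2 * n + 1) ω hω (hag.mono hodd)
    rwa [show (2 * n + 1) / 2 = n by omega] at hU'

end Halving

lemma exists_halving_pair [Countable ι] (C : ℕ → Prop → Prop → Prop)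
    (U : ι → Set ℕ → Set ℕ → Prop)
    (hU : ∀ i x y m, (∀ j, C j (j ∈ x) (j ∈ y)) → ∃ x' y' : Set ℕ, (∀ j, C j (j ∈ x') (j ∈ y')) ∧
      AgreeOn (Iio m) x' x ∧ AgreeOn (Iio m) y' y ∧ ∃ m', ∀ v w : Set ℕ,
        (∀ j, C j (j ∈ v) (j ∈ w)) → AgreeOn (Iio m') v x' → AgreeOn (Iio m') w y' → U i v w)
    (hC : ∃ x y : Set ℕ, ∀ j, C j (j ∈ x) (j ∈ y)) :
    ∃ S x y : Set ℕ, (∀ j, C j (j ∈ x) (j ∈ y)) ∧ ∀ i, ∀ v w : Set ℕ,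
      (∀ j, C j (j ∈ v) (j ∈ w)) →
      (AgreeOn S v x ∧ AgreeOn S w y ∨ AgreeOn Sᶜ v x ∧ AgreeOn Sᶜ w y) → U i v w := by
  let code (x y : Set ℕ) : ℕ → Prop × Prop := fun j => (j ∈ x, j ∈ y)
  have code_eqOn {S v w x y : Set ℕ} :
      EqOn (code v w) (code x y) S ↔ AgreeOn S v x ∧ AgreeOn S w y := by
    simp only [EqOn, AgreeOn, code, Prod.mk.injEq, eq_iff_iff]
    exact forall₂_and
  have code_surj (ω : ℕ → Prop × Prop) : ∃ x y, code x y = ω :=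
    ⟨{j | (ω j).1}, {j | (ω j).2}, rfl⟩
  have code_mem {x y : Set ℕ} :
      code x y ∈ univ.pi (fun j => {p : Prop × Prop | C j p.1 p.2}) ↔
        ∀ j, C j (j ∈ x) (j ∈ y) := by
    simp only [mem_univ_pi, mem_ofPred_eq, code]
  have hdense (i : ι) : ContainsDenseOpen (fun j => {p : Prop × Prop | C j p.1 p.2})
      {ω | ∀ x y, code x y = ω → U i x y} := by
    intro ω hω m
    obtain ⟨x, y, rfl⟩ := code_surj ω
    obtain ⟨x', y', hC', hx, hy, m', hm'⟩ := hU i x y m (code_mem.1 hω)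
    refine ⟨code x' y', code_mem.2 hC', code_eqOn.2 ⟨hx, hy⟩, m', ?_⟩
    rintro ω' hω' hag v w rfl
    exact hm' v w (code_mem.1 hω') (code_eqOn.1 hag).1 (code_eqOn.1 hag).2
  obtain ⟨x₀, y₀, h₀⟩ := hC
  obtain ⟨S, ω, hω, hSω⟩ := exists_halving hdense ⟨code x₀ y₀, code_mem.2 h₀⟩
  obtain ⟨x, y, rfl⟩ := code_surj ω
  refine ⟨S, x, y, code_mem.1 hω, fun i v w hvw hag => ?_⟩
  exact hSω i (code v w) (code_mem.2 hvw) (by rwa [code_eqOn, code_eqOn]) v w rfl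

/-- Every bit of `G d` is a continuous function of `d ∈ Z`, in the topology of the Cantor
space. -/
def CantorContinuousOn (G : Set ℕ → Set κ) (Z : Set (Set ℕ)) : Prop :=
  ∀ d ∈ Z, ∀ k, ∃ m, ∀ d' ∈ Z, AgreeOn (Iio m) d' d → (k ∈ G d' ↔ k ∈ G d)

section ContinuousLifting

lemma CantorContinuousOn.eventually {G : Set ℕ → Set κ} {Z : Set (Set ℕ)}
    (hG : CantorContinuousOn G Z) {d : Set ℕ} (hd : d ∈ Z) (k : κ) :
    ∀ᶠ m in atTop, ∀ d' ∈ Z, AgreeOn (Iio m) d' d → (k ∈ G d' ↔ k ∈ G d) := by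
  obtain ⟨m, hm⟩ := hG d hd k
  filter_upwards [eventually_ge_atTop m] with m' hm' d' hd' hag
  exact hm d' hd' (hag.mono (Iio_subset_Iio hm'))

/-- The bit `k` of `G` respects the union and the intersection of `x` and `y`. -/
def IsHomAt (G : Set ι → Set κ) (k : κ) (x y : Set ι) : Prop :=
  (k ∈ G (x ∪ y) ↔ k ∈ G x ∨ k ∈ G y) ∧ (k ∈ G (x ∩ y) ↔ k ∈ G x ∧ k ∈ G y)

variable {F : Set ℕ → Set κ} {G : Set ℕ → Set κ} {A : Set ℕ}

lemma CantorContinuousOn.exists_isHomAt_iff (hG : CantorContinuousOn G (𝒫 A)) {x y : Set ℕ}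
    (hx : x ⊆ A) (hy : y ⊆ A) (k : κ) : ∃ m, ∀ v ⊆ A, ∀ w ⊆ A, AgreeOn (Iio m) v x →
      AgreeOn (Iio m) w y → (IsHomAt G k v w ↔ IsHomAt G k x y) := by
  obtain ⟨m, hmx, hmy, hmu, hmi⟩ := ((hG.eventually hx k).and <| (hG.eventually hy k).and <|
    (hG.eventually (union_subset hx hy) k).and
      (hG.eventually (inter_subset_left.trans hx : x ∩ y ⊆ A) k)).exists
  refine ⟨m, fun v hv w hw hvx hwy => ?_⟩
  rw [IsHomAt, hmx v hv hvx, hmy w hw hwy,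
    hmu (v ∪ w) (union_subset hv hw) fun i hi => or_congr (hvx i hi) (hwy i hi),
    hmi (v ∩ w) (inter_subset_left.trans hv) fun i hi => and_congr (hvx i hi) (hwy i hi), IsHomAt]

lemma IsHomModFin.eventually_isHomAt (hF : IsHomModFin F)
    (hGF : ∀ x ⊆ A, ∀ᶠ k in cofinite, (k ∈ G x ↔ k ∈ F x)) {x y : Set ℕ}
    (hx : x ⊆ A) (hy : y ⊆ A) : ∀ᶠ k in cofinite, IsHomAt G k x y := by
  filter_upwards [hGF x hx, hGF y hy, hGF (x ∪ y) (union_subset hx hy),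
    hGF (x ∩ y) (inter_subset_left.trans hx), hF.inter x y, hF.union x y]
    with k hkx hky hku hki hinter hunion
  rw [IsHomAt, hkx, hky, hku, hki]
  exact ⟨hunion, hinter⟩

lemma exists_stems_isHomAt [Countable κ] (hF : IsHomModFin F)
    (hG : CantorContinuousOn G (𝒫 A)) (hGF : ∀ x ⊆ A, ∀ᶠ k in cofinite, (k ∈ G x ↔ k ∈ F x)) :
    ∃ (J : Finset κ) (m : ℕ), ∃ x₀ ⊆ A, ∃ y₀ ⊆ A, ∀ x ⊆ A, ∀ y ⊆ A, AgreeOn (Iio m) x x₀ →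
      AgreeOn (Iio m) y y₀ → ∀ k ∉ J, IsHomAt G k x y := by
  by_contra! hcon
  have hsub {x y : Set ℕ} (h : ∀ i, (i ∈ x → i ∈ A) ∧ (i ∈ y → i ∈ A)) : x ⊆ A ∧ y ⊆ A :=
    ⟨fun i => (h i).1, fun i => (h i).2⟩
  obtain ⟨_, x, y, hxy, hU⟩ := exists_halving_pair (fun i a b => (a → i ∈ A) ∧ (b → i ∈ A))
    (fun (J : Finset κ) x y => ∃ k ∉ J, ¬IsHomAt G k x y)
    (fun J x y m hxy => by
      obtain ⟨x', hx', y', hy', hxx', hyy', k, hkJ, hk⟩ :=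
        hcon J m x (hsub hxy).1 y (hsub hxy).2
      obtain ⟨m', hm'⟩ := hG.exists_isHomAt_iff hx' hy' k
      exact ⟨x', y', fun i => ⟨@hx' i, @hy' i⟩, hxx', hyy', m', fun v w hvw hv hw =>
        ⟨k, hkJ, fun h => hk ((hm' v (hsub hvw).1 w (hsub hvw).2 hv hw).1 h)⟩⟩)
    ⟨∅, ∅, fun _ => ⟨False.elim, False.elim⟩⟩
  have hfin := hF.eventually_isHomAt hGF (hsub hxy).1 (hsub hxy).2
  obtain ⟨k, hk, hkxy⟩ := hU hfin.toFinset x y hxy (Or.inl ⟨.refl _ _, .refl _ _⟩)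
  exact hk (hfin.mem_toFinset.2 hkxy)

lemma exists_forall_iff_mem_of_additive {B T : Set ι} {u : Set ι → Prop}
    (hunion : ∀ z ⊆ B, ∀ w ⊆ B, (u (z ∪ w) ↔ u z ∨ u w))
    (hdisj : ∀ z ⊆ B, ∀ w ⊆ B, Disjoint z w → ¬(u z ∧ u w))
    (hT : T.Finite) (hTB : T ⊆ B) (huT : u T) : ∃ i ∈ B, ∀ z ⊆ B, (u z ↔ i ∈ z) := by
  have hpoint : ∃ i ∈ B, u {i} := by
    induction T, hT using Set.Finite.induction_on with
    | empty => exact (hdisj ∅ hTB ∅ hTB (disjoint_empty ∅) ⟨huT, huT⟩).elim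
    | @insert a T _ _ ih =>
      obtain ⟨haB, hTB⟩ := insert_subset_iff.1 hTB
      rw [insert_eq, hunion _ (singleton_subset_iff.2 haB) _ hTB] at huT
      exact huT.elim (fun ha => ⟨a, haB, ha⟩) (ih hTB)
  obtain ⟨i, hiB, hui⟩ := hpoint
  have hi : {i} ⊆ B := singleton_subset_iff.2 hiB
  refine ⟨i, hiB, fun z hz => ⟨fun huz => ?_, fun hiz => ?_⟩⟩
  · by_contra hiz
    exact hdisj {i} hi z hz (disjoint_singleton_left.2 hiz) ⟨hui, huz⟩
  · rw [← union_eq_self_of_subset_left (singleton_subset_iff.2 hiz), hunion _ hi z hz]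
    exact Or.inl hui

lemma exists_forall_mem_union_iff {G : Set ι → Set κ} {k : κ} {s t B T : Set ι}
    (hs : Disjoint s B) (ht : Disjoint t B)
    (hhom : ∀ z ⊆ B, ∀ w ⊆ B, IsHomAt G k (s ∪ z) (t ∪ w)) (hks : k ∉ G s) (hkt : k ∉ G t)
    (hT : T.Finite) (hTB : T ⊆ B) (hkT : k ∈ G (s ∪ T)) :
    ∃ i ∈ B, ∀ z ⊆ B, (k ∈ G (s ∪ z) ↔ i ∈ z) := by
  have hunion : ∀ z ⊆ B, ∀ w ⊆ B,
      (k ∈ G (s ∪ t ∪ (z ∪ w)) ↔ k ∈ G (s ∪ z) ∨ k ∈ G (t ∪ w)) := by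
    intro z hz w hw
    rw [← (hhom z hz w hw).1, union_union_union_comm]
  have hleft : ∀ z ⊆ B, (k ∈ G (s ∪ t ∪ z) ↔ k ∈ G (s ∪ z)) := by
    intro z hz
    simpa only [union_empty, hkt, or_false] using hunion z hz ∅ (empty_subset B)
  have hright : ∀ z ⊆ B, (k ∈ G (s ∪ t ∪ z) ↔ k ∈ G (t ∪ z)) := by
    intro z hz
    simpa only [union_empty, empty_union, hks, false_or] using hunion ∅ (empty_subset B) z hz
  have hst : ∀ z ⊆ B, (k ∈ G (t ∪ z) ↔ k ∈ G (s ∪ z)) := fun z hz =>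
    (hright z hz).symm.trans (hleft z hz)
  refine exists_forall_iff_mem_of_additive (fun z hz w hw => ?_) (fun z hz w hw hzw => ?_)
    hT hTB hkT
  · rw [← hleft _ (union_subset hz hw), hunion z hz w hw, hst w hw]
  · have hinter : (s ∪ z) ∩ (t ∪ w) = (s ∪ ∅) ∩ (t ∪ ∅) := by
      rw [inter_union_distrib_left, union_inter_distrib_right, union_inter_distrib_right,
        (ht.mono_right hz).symm.inter_eq, (hs.mono_right hw).inter_eq, hzw.inter_eq]
      simp only [union_empty]
    rw [← hst w hw, ← (hhom z hz w hw).2, hinter,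
      (hhom ∅ (empty_subset B) ∅ (empty_subset B)).2, union_empty]
    exact fun h => hks h.1

lemma CantorContinuousOn.exists_finite_mem {s B : Set ℕ} (hG : CantorContinuousOn G (𝒫 A))
    (hsB : s ∪ B ⊆ A) {k : κ} (hk : k ∈ G (s ∪ B)) :
    ∃ T : Set ℕ, T.Finite ∧ T ⊆ B ∧ k ∈ G (s ∪ T) := by
  obtain ⟨m, hm⟩ := hG _ hsB k
  refine ⟨B ∩ Iio m, (finite_Iio m).inter_of_right B, inter_subset_left, (hm _ ?_ ?_).2 hk⟩
  · exact (union_subset_union_right s inter_subset_left).trans hsB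
  · exact fun i hi => or_congr_right (and_iff_left hi)

lemma IsHomModFin.eventually_mem_iff_of_union (hF : IsHomModFin F)
    (hGF : ∀ x ⊆ A, ∀ᶠ k in cofinite, (k ∈ G x ↔ k ∈ F x)) {s x : Set ℕ} (hs : s ⊆ A)
    (hx : x ⊆ A) (hsx : Disjoint s x) :
    ∀ᶠ k in cofinite, (k ∈ F x ↔ k ∉ G s ∧ k ∈ G (s ∪ x)) := by
  filter_upwards [hGF s hs, hGF (s ∪ x) (union_subset hs hx), hF.union s x, hF.disjoint hsx]
    with k h1 h2 h3 h4
  rw [h1, h2, h3]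
  tauto

theorem SimpleOn.of_cantorContinuousOn [Countable κ] (hF : IsHomModFin F)
    (hG : CantorContinuousOn G (𝒫 A)) (hGF : ∀ x ⊆ A, ∀ᶠ k in cofinite, (k ∈ G x ↔ k ∈ F x)) :
    SimpleOn F A := by
  obtain ⟨J, m, x₀, hx₀, y₀, hy₀, hhom⟩ := exists_stems_isHomAt hF hG hGF
  let B := A \ Iio m
  have hBA : B ⊆ A := sdiff_subset
  have stem {x₀ z : Set ℕ} (hx₀ : x₀ ⊆ A) (hz : z ⊆ B) :
      x₀ ∩ Iio m ∪ z ⊆ A ∧ AgreeOn (Iio m) (x₀ ∩ Iio m ∪ z) x₀ :=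
    ⟨union_subset (inter_subset_left.trans hx₀) (hz.trans hBA), fun i hi =>
      ⟨fun h => h.elim And.left fun h => ((hz h).2 hi).elim, fun h => Or.inl ⟨h, hi⟩⟩⟩
  have hdisj (x : Set ℕ) : Disjoint (x ∩ Iio m) B :=
    disjoint_sdiff_self_right.mono_left inter_subset_right
  let s := x₀ ∩ Iio m
  let t := y₀ ∩ Iio m
  have hs : s ⊆ A := inter_subset_left.trans hx₀
  have ht : t ⊆ A := inter_subset_left.trans hy₀
  let D : Set κ := {k | k ∉ J ∧ k ∉ G s ∧ k ∉ G t ∧ k ∈ G (s ∪ B)}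
  have hpoint : ∀ k ∈ D, ∃ i ∈ B, ∀ z ⊆ B, (k ∈ G (s ∪ z) ↔ i ∈ z) := by
    rintro k ⟨hkJ, hks, hkt, hkB⟩
    obtain ⟨T, hT, hTB, hkT⟩ := hG.exists_finite_mem (union_subset hs hBA) hkB
    exact exists_forall_mem_union_iff (hdisj x₀) (hdisj y₀) (fun z hz w hw =>
      hhom _ (stem hx₀ hz).1 _ (stem hy₀ hw).1 (stem hx₀ hz).2 (stem hy₀ hw).2 k hkJ)
      hks hkt hT hTB hkT
  choose! H hHB hH using hpoint
  refine SimpleOn.of_finite_diff hF (B := B) ⟨D, H, hHB, fun x hx => ?_⟩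
    ((finite_Iio m).subset (by rw [sdiff_sdiff_right_self]; exact inter_subset_right))
  filter_upwards [J.finite_toSet.compl_mem_cofinite, hF.mono hx,
    hF.eventually_mem_iff_of_union hGF hs (hx.trans hBA) ((hdisj x₀).mono_right hx),
    hF.eventually_mem_iff_of_union hGF hs hBA (hdisj x₀),
    hF.eventually_mem_iff_of_union hGF ht hBA (hdisj y₀)] with k hkJ hxB hsx hsB htB
  refine ⟨fun hk => ?_, fun hk => hsx.2 ⟨hk.1.2.1, (hH k hk.1 x hx).2 hk.2⟩⟩
  have hkD : k ∈ D := ⟨hkJ, (hsx.1 hk).1, (htB.1 (hxB hk)).1, (hsB.1 (hxB hk)).2⟩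
  exact ⟨hkD, (hH k hkD x hx).1 (hsx.1 hk).2⟩

end ContinuousLifting

section Realizes

/-- Every subset of `ι` that agrees with `p` on `P` has the same trace on `Q` as some member
of `Z`. -/
def Realizes (Z : Set (Set ι)) (P p Q : Set ι) : Prop :=
  ∀ q, AgreeOn P q p → ∃ d ∈ Z, AgreeOn Q d q

lemma Realizes.inter_agreeOn {Z : Set (Set ι)} {P p Q : Set ι} (h : Realizes Z P p Q)
    (hPQ : P ⊆ Q) : Realizes (Z ∩ {d | AgreeOn P d p}) P p Q := fun q hq => by
  obtain ⟨d, hd, hdq⟩ := h q hq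
  exact ⟨d, ⟨hd, (hdq.mono hPQ).trans hq⟩, hdq⟩

/-- For members of `Z` extending the stem `x` or `x'` of length `m`, the trace on `A` determines
the part of the value of `F` inside `F A`, with the exception of the bits in `J`. -/
def DeterminedOn (F : Set ℕ → Set κ) (Z : Set (Set ℕ)) (A : Set ℕ) (J : Finset κ) (m : ℕ)
    (x x' : Set ℕ) : Prop :=
  ∀ k ∉ J, k ∈ F A → ∀ d ∈ Z, ∀ d' ∈ Z, AgreeOn A d d' → AgreeOn (Iio m) d x →
    AgreeOn (Iio m) d' x' → (k ∈ F d ↔ k ∈ F d')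

variable {F : Set ℕ → Set κ} {Z : Set (Set ℕ)} {P p A : Set ℕ}

lemma exists_determinedOn [Countable κ] (hF : IsHomModFin F) (hZ : CantorContinuousOn F Z)
    (hZp : ∀ d ∈ Z, AgreeOn P d p)
    (hhalf : ∀ S, Realizes Z P p (P ∪ A ∪ S) ∨ Realizes Z P p (P ∪ A ∪ Sᶜ)) :
    ∃ J m x x', AgreeOn P x p ∧ AgreeOn P x' p ∧ AgreeOn A x x' ∧
      DeterminedOn F Z A J m x x' := by
  by_contra! hcon
  unfold DeterminedOn at hcon
  push Not at hcon
  obtain ⟨S, x, y, hxy, hU⟩ := exists_halving_pair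
    (fun i a b => (i ∈ P → (a ↔ i ∈ p)) ∧ (i ∈ P → (b ↔ i ∈ p)) ∧ (i ∈ A → (a ↔ b)))
    (fun (J : Finset κ) x y => ∃ k ∉ J, k ∈ F A ∧ (x ∈ Z → y ∈ Z → ¬(k ∈ F x ↔ k ∈ F y)))
    (fun J x y m hxy => by
      obtain ⟨k, hkJ, hkA, d, hd, d', hd', hA, hdx, hdy, hk⟩ :=
        hcon J m x y (fun i => (hxy i).1) (fun i => (hxy i).2.1) fun i => (hxy i).2.2
      obtain ⟨m', hm, hm'⟩ := ((hZ.eventually hd k).and (hZ.eventually hd' k)).exists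
      refine ⟨d, d', fun i => ⟨hZp d hd i, hZp d' hd' i, hA i⟩, hdx, hdy, m', ?_⟩
      intro v w _ hvd hwd
      refine ⟨k, hkJ, hkA, fun hv hw h => ?_⟩
      rw [hm v hv hvd, hm' w hw hwd] at h
      tauto)
    ⟨p, p, fun _ => ⟨fun _ => Iff.rfl, fun _ => Iff.rfl, fun _ => Iff.rfl⟩⟩
  have not_realizes (T : Set ℕ) (hT : T = S ∨ T = Sᶜ) : ¬Realizes Z P p (P ∪ A ∪ T) := by
    intro hreal
    obtain ⟨d, hd, hdx⟩ := hreal x fun i => (hxy i).1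
    obtain ⟨d', hd', hdy⟩ := hreal y fun i => (hxy i).2.1
    have hA : AgreeOn A d d' := fun i hi =>
      (hdx i (Or.inl (Or.inr hi))).trans <| ((hxy i).2.2 hi).trans
        (hdy i (Or.inl (Or.inr hi))).symm
    have hfin := hF.mem_iff_of_agreeOn hA
    have hTd : AgreeOn T d x ∧ AgreeOn T d' y :=
      ⟨hdx.mono subset_union_right, hdy.mono subset_union_right⟩
    obtain ⟨k, hk, hkA, hkd⟩ := hU hfin.toFinset d d'
      (fun i => ⟨hZp d hd i, hZp d' hd' i, hA i⟩)
      (by rcases hT with rfl | rfl; exacts [Or.inl hTd, Or.inr hTd])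
    exact hk (hfin.mem_toFinset.2 fun h => hkd hd hd' (h hkA))
  exact (hhalf S).elim (not_realizes S (Or.inl rfl)) (not_realizes Sᶜ (Or.inr rfl))

lemma DeterminedOn.self_left {J : Finset κ} {m : ℕ} {x x' : Set ℕ} (hAP : Disjoint P A)
    (hfin : ∀ M, Realizes Z P p (P ∪ A ∪ Iio M)) (hx' : AgreeOn P x' p) (hA : AgreeOn A x x')
    (h : DeterminedOn F Z A J m x x') : DeterminedOn F Z A J m x x := by
  intro k hkJ hkA d hd d' hd' hdd' hdx hdx'
  obtain ⟨e, he, heq⟩ := hfin m (A.ite d x')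
    (((AgreeOn.ite_right A d x').mono hAP.subset_compl_right).trans hx')
  have heA : AgreeOn A e d :=
    (heq.mono (subset_union_right.trans subset_union_left)).trans (.ite_left A d x')
  have hem : AgreeOn (Iio m) e x' := by
    refine (heq.mono subset_union_right).trans fun i hi => ?_
    by_cases hiA : i ∈ A
    · rw [AgreeOn.ite_left A d x' i hiA, hdx i hi, hA i hiA]
    · exact AgreeOn.ite_right A d x' i hiA
  rw [h k hkJ hkA d hd e he heA.symm hdx hem,
    h k hkJ hkA d' hd' e he (heA.trans hdd').symm hdx' hem]

lemma DeterminedOn.cantorContinuousOn {J : Finset κ} {m : ℕ} {x B : Set ℕ}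
    (hZ : CantorContinuousOn F Z) (hZp : ∀ d ∈ Z, AgreeOn P d p) (hAP : Disjoint P A)
    (hfin : ∀ M, Realizes Z P p (P ∪ A ∪ Iio M)) (h : DeterminedOn F Z A J m x x) (hBA : B ⊆ A)
    (hBm : Disjoint (Iio m) B) {e : Set ℕ → Set ℕ}
    (he : ∀ c ⊆ B, e c ∈ Z ∧ AgreeOn (A ∪ Iio m) (e c) (B.ite c x)) {R : Set κ}
    (hR : ∀ k ∈ R, k ∉ J ∧ k ∈ F A) :
    CantorContinuousOn (fun c => F (e c) ∩ R) (𝒫 B) := by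
  intro c hc k
  obtain ⟨hecZ, hec⟩ := he c hc
  obtain ⟨M, hM⟩ := hZ (e c) hecZ k
  refine ⟨max m M, fun c' hc' hcc' => and_congr_left fun hkR => ?_⟩
  obtain ⟨hec'Z, hec'⟩ := he c' hc'
  have hstem (c : Set ℕ) : AgreeOn (Iio m) (B.ite c x) x :=
    (AgreeOn.ite_right B c x).mono hBm.subset_compl_right
  obtain ⟨d, hd, hdq⟩ := hfin (max m M) (B.ite c' (e c)) <|
    ((AgreeOn.ite_right B c' (e c)).mono (hAP.mono_right hBA).subset_compl_right).trans
      (hZp _ hecZ)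
  have hdec : AgreeOn (Iio (max m M)) d (e c) := by
    refine (hdq.mono subset_union_right).trans fun i hi => ?_
    by_cases hiB : i ∈ B
    · rw [AgreeOn.ite_left B c' (e c) i hiB, hec i (Or.inl (hBA hiB)), hcc' i hi,
        AgreeOn.ite_left B c x i hiB]
    · exact AgreeOn.ite_right B c' (e c) i hiB
  have hdA : AgreeOn A d (e c') := by
    refine (hdq.mono (subset_union_right.trans subset_union_left)).trans fun i hi => ?_
    rw [hec' i (Or.inl hi)]
    by_cases hiB : i ∈ B
    · rw [AgreeOn.ite_left B c' (e c) i hiB, AgreeOn.ite_left B c' x i hiB]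
    · rw [AgreeOn.ite_right B c' (e c) i hiB, hec i (Or.inl hi), AgreeOn.ite_right B c x i hiB,
        AgreeOn.ite_right B c' x i hiB]
  rw [← hM d hd (hdec.mono (Iio_subset_Iio (le_max_right m M)))]
  exact (h k (hR k hkR).1 (hR k hkR).2 d hd (e c') hec'Z hdA
    ((hdec.mono (Iio_subset_Iio (le_max_left m M))).trans <|
      (hec.mono subset_union_right).trans (hstem c))
    ((hec'.mono subset_union_right).trans (hstem c'))).symm

theorem SimpleOn.of_realizes [Countable κ] (hF : IsHomModFin F) (hZ : CantorContinuousOn F Z)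
    (hZp : ∀ d ∈ Z, AgreeOn P d p) (hAP : Disjoint P A)
    (hfin : ∀ M, Realizes Z P p (P ∪ A ∪ Iio M))
    (hhalf : ∀ S, Realizes Z P p (P ∪ A ∪ S) ∨ Realizes Z P p (P ∪ A ∪ Sᶜ)) :
    SimpleOn F A := by
  obtain ⟨J, m, x, x', hx, hx', hxx', hdet⟩ := exists_determinedOn hF hZ hZp hhalf
  replace hdet := hdet.self_left hAP hfin hx' hxx'
  let B := A \ Iio m
  have hBA : B ⊆ A := sdiff_subset
  have hsel : ∀ c ⊆ B, ∃ d ∈ Z, AgreeOn (A ∪ Iio m) d (B.ite c x) := by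
    intro c _
    obtain ⟨d, hd, hdc⟩ := hfin m (B.ite c x) <|
      ((AgreeOn.ite_right B c x).mono (hAP.mono_right hBA).subset_compl_right).trans hx
    exact ⟨d, hd, hdc.mono (union_subset_union_left _ subset_union_right)⟩
  choose! e he using hsel
  have hcont := hdet.cantorContinuousOn hZ hZp hAP hfin hBA disjoint_sdiff_self_right he
    (R := {k ∈ F A ∩ F B | k ∉ J}) fun k hk => ⟨hk.2, hk.1.1⟩
  refine SimpleOn.of_finite_diff hF (B := B) (.of_cantorContinuousOn hF hcont fun c hc => ?_)
    ((finite_Iio m).subset (by rw [sdiff_sdiff_right_self]; exact inter_subset_right))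
  have hec : AgreeOn B (e c) c :=
    ((he c hc).2.mono (hBA.trans subset_union_left)).trans (.ite_left B c x)
  filter_upwards [hF.mem_iff_of_agreeOn hec, hF.mono hBA, hF.mono hc,
    J.finite_toSet.compl_mem_cofinite] with k hk hBA hcB hkJ
  exact ⟨fun h => (hk h.2.1.2).1 h.1, fun h =>
    ⟨(hk (hcB h)).2 h, ⟨hBA (hcB h), hcB h⟩, hkJ⟩⟩

lemma exists_agreeOn_of_chain {P p : ℕ → Set ι} (hP : Monotone P)
    (hp : ∀ n, AgreeOn (P n) (p (n + 1)) (p n)) : ∃ d, ∀ n, AgreeOn (P n) d (p n) := by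
  have hle : ∀ n n', n ≤ n' → AgreeOn (P n) (p n') (p n) := by
    intro n n' hn
    induction n', hn using Nat.le_induction with
    | base => exact .refl _ _
    | succ n' hn ih => exact ((hp n').mono (hP hn)).trans ih
  refine ⟨{i | ∃ n, i ∈ P n ∧ i ∈ p n}, fun n i hi => ⟨?_, fun h => ⟨n, hi, h⟩⟩⟩
  rintro ⟨n', hi', hip⟩
  rcases le_total n n' with h | h
  · exact (hle n n' h i hi).1 hip
  · exact (hle n' n h i hi').2 hip

/-- Otherwise one could diagonalize: decide more and more of a set `d`, avoiding `Z n` at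
stage `n`. -/
lemma exists_forall_realizes {𝒮 : Set (Set ι)} {P₀ p₀ : Set ι} (hP₀ : P₀ ∈ 𝒮)
    (Z : ℕ → Set (Set ι)) (hcov : ∀ d, AgreeOn P₀ d p₀ → ∃ n, d ∈ Z n) :
    ∃ n, ∃ P ∈ 𝒮, ∃ p, ∀ Q ∈ 𝒮, P ⊆ Q → Realizes (Z n) P p Q := by
  by_contra! hcon
  unfold Realizes at hcon
  push Not at hcon
  choose! Q hQ hPQ q hqp hqZ using hcon
  let s : ℕ → Set ι × Set ι := fun n => Nat.rec (P₀, p₀) (fun n a => (Q n a.1 a.2, q n a.1 a.2)) n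
  have hs (n : ℕ) : (s n).1 ∈ 𝒮 := by
    induction n with
    | zero => exact hP₀
    | succ n ih => exact hQ n _ ih _
  obtain ⟨d, hd⟩ := exists_agreeOn_of_chain (P := fun n => (s n).1) (p := fun n => (s n).2)
    (monotone_nat_of_le_succ fun n => hPQ n _ (hs n) _) fun n => hqp n _ (hs n) _
  obtain ⟨n, hn⟩ := hcov d (hd 0)
  exact hqZ n _ (hs n) (s n).2 d hn (hd (n + 1))

theorem eventually_simpleOn_sdiff_of_cover [Countable κ] (hF : IsHomModFin F) {A : ι → Set ℕ}
    (hA : Pairwise fun l l' => (A l ∩ A l').Finite) {Z : ℕ → Set (Set ℕ)}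
    (hZ : ∀ n, CantorContinuousOn F (Z n)) (hcov : ∀ d, AgreeOn P d p → ∃ n, d ∈ Z n) :
    ∀ᶠ l in cofinite, SimpleOn F (A l \ P) := by
  let 𝒮 : Set (Set ℕ) := {Q | ¬∀ᶠ l in cofinite, SimpleOn F (A l \ Q)}
  have enlarge {Q Q' : Set ℕ} (hQ : Q ∈ 𝒮)
      (hfin : ∀ᶠ l in cofinite, ((A l ∩ Q') \ Q).Finite) : Q' ∈ 𝒮 := by
    refine fun hQ' => hQ ?_
    filter_upwards [hQ', hfin] with l hl hlfin
    exact hl.of_finite_diff hF (hlfin.subset fun i hi =>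
      ⟨⟨hi.1.1, by_contra fun h => hi.2 ⟨hi.1.1, h⟩⟩, hi.1.2⟩)
  have split {Q : Set ℕ} (hQ : Q ∈ 𝒮) (S : Set ℕ) : Q ∪ S ∈ 𝒮 ∨ Q ∪ Sᶜ ∈ 𝒮 := by
    by_contra! h
    refine hQ ?_
    filter_upwards [not_not.1 h.1, not_not.1 h.2] with l hl hl'
    refine (hl.union hF hl').mono fun i hi => ?_
    by_cases hiS : i ∈ S
    · exact Or.inr ⟨hi.1, fun h => h.elim hi.2 fun h => h hiS⟩
    · exact Or.inl ⟨hi.1, fun h => h.elim hi.2 hiS⟩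
  by_contra hP
  obtain ⟨n, P', hP', p', hreal⟩ := exists_forall_realizes (𝒮 := 𝒮) hP Z hcov
  obtain ⟨l, hl⟩ := (not_eventually.1 hP').exists
  have hbase (M : ℕ) : P' ∪ A l \ P' ∪ Iio M ∈ 𝒮 := by
    refine enlarge hP' ?_
    filter_upwards [(finite_singleton l).compl_mem_cofinite] with l' hl'
    refine ((hA hl').union (finite_Iio M)).subset ?_
    rintro i ⟨⟨hil', (hi | hi) | hi⟩, hiP⟩
    exacts [(hiP hi).elim, Or.inl ⟨hil', hi.1⟩, Or.inr hi]
  have hrealizes {T : Set ℕ} (hT : P' ∪ A l \ P' ∪ T ∈ 𝒮) :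
      Realizes (Z n ∩ {d | AgreeOn P' d p'}) P' p' (P' ∪ A l \ P' ∪ T) :=
    have hsub : P' ⊆ P' ∪ A l \ P' ∪ T := subset_union_left.trans subset_union_left
    (hreal _ hT hsub).inter_agreeOn hsub
  refine hl (.of_realizes hF (fun d hd k => ?_) (fun d hd => hd.2) disjoint_sdiff_self_right
    (fun M => hrealizes (hbase M)) fun S => ?_)
  · obtain ⟨m, hm⟩ := hZ n d hd.1 k
    exact ⟨m, fun d' hd' => hm d' hd'.1⟩
  · have h0 := hbase 0
    rw [show Iio 0 = (∅ : Set ℕ) from Iio_bot, union_empty] at h0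
    exact (split h0 S).imp hrealizes hrealizes

end Realizes

section OpenColouring

lemma OCA.of_separating_predicates (oca : OCA) {X ι : Type} [Countable ι] {p : ι → X → Prop}
    (hp : ∀ x y, (∀ i, p i x ↔ p i y) → x = y) {K : X → X → Prop}
    (hK : ∀ x y, K x y → ∃ s : Set ι, s.Finite ∧ ∀ x' y', (∀ i ∈ s, p i x' ↔ p i x) →
      (∀ i ∈ s, p i y' ↔ p i y) → K x' y')
    (hsymm : ∀ x y, K x y → K y x) (hirr : ∀ x, ¬K x x) :
    (∃ W : Set X, ¬W.Countable ∧ W.Pairwise K) ∨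
      ∃ Y : ℕ → Set X, ⋃ n, Y n = univ ∧ ∀ n, (Y n).Pairwise fun x y => ¬K x y := by
  classical
  let e : X → ι → Bool := fun x i => decide (p i x)
  have he : Function.Injective e := fun x y hxy => hp x y fun i =>
    decide_eq_decide.1 (congrFun hxy i)
  let _ : MetricSpace (ι → Bool) := TopologicalSpace.metrizableSpaceMetric _
  let _ : MetricSpace X := MetricSpace.induced e he inferInstance
  have hind : Topology.IsInducing e := ⟨rfl⟩
  have : SecondCountableTopology X := hind.secondCountableTopology
  have hnhds (x : X) {s : Set ι} (hs : s.Finite) : ∀ᶠ x' in nhds x, ∀ i ∈ s, p i x' ↔ p i x := by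
    rw [eventually_all_finite hs]
    intro i _
    have hi : Continuous fun x' => e x' i := (continuous_apply i).comp hind.continuous
    exact (hi.continuousAt.eventually_mem ((isOpen_discrete {e x i}).mem_nhds rfl)).mono
      fun x' hx' => decide_eq_decide.1 hx'
  refine oca X {q | K q.1 q.2} (isOpen_iff_eventually.2 ?_) hsymm hirr
  rintro ⟨x, y⟩ hxy
  obtain ⟨s, hs, hsK⟩ := hK x y hxy
  exact ((hnhds x hs).prod_nhds (hnhds y hs)).mono fun q hq => hsK q.1 q.2 hq.1 hq.2

/-- Regarding `x` as the partial function with domain `x.1` that is the indicator of `x.2`,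
the functions `x` and `y` agree on their common domain. -/
def Coherent (x y : Set ι × Set ι) : Prop := AgreeOn (x.1 ∩ y.1) x.2 y.2

lemma Coherent.symm {x y : Set ι × Set ι} (h : Coherent x y) : Coherent y x :=
  fun i hi => (h i hi.symm).symm

/-- A family `ℬ` of sets is locally almost disjoint if any two distinct members have
neighbourhoods in `ℬ`, in the topology of pointwise convergence, such that all intersections of
members of one with members of the other lie in a common finite set. The same finite set `s`
serves to define the neighbourhoods. -/
def LocallyAlmostDisjoint (ℬ : Set (Set ι)) : Prop :=
  ∀ B ∈ ℬ, ∀ B' ∈ ℬ, B ≠ B' → ∃ s : Set ι, s.Finite ∧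
    ∀ C ∈ ℬ, ∀ C' ∈ ℬ, AgreeOn s C B → AgreeOn s C' B' → C ∩ C' ⊆ s

lemma LocallyAlmostDisjoint.finite_inter {ℬ : Set (Set ι)} (hℬ : LocallyAlmostDisjoint ℬ)
    {B B' : Set ι} (hB : B ∈ ℬ) (hB' : B' ∈ ℬ) (hne : B ≠ B') : (B ∩ B').Finite := by
  obtain ⟨s, hs, hsB⟩ := hℬ B hB B' hB' hne
  exact hs.subset (hsB B hB B' hB' (.refl s B) (.refl s B'))

/-- The pairs of a member of `ℬ` and a subset of it. -/
def markedSets (ℬ : Set (Set ι)) : Set (Set ι × Set ι) := {x | x.1 ∈ ℬ ∧ x.2 ⊆ x.1}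

lemma Coherent.eq_of_fst_eq {ℬ : Set (Set ι)} {x y : Set ι × Set ι} (h : Coherent x y)
    (hx : x ∈ markedSets ℬ) (hy : y ∈ markedSets ℬ) (hxy : x.1 = y.1) : x = y := by
  have hagree := h.inter_eq
  rw [← hxy, inter_self, inter_eq_left.2 hx.2, inter_eq_left.2 (hxy ▸ hy.2)] at hagree
  exact Prod.ext hxy hagree

lemma LocallyAlmostDisjoint.exists_forall_coherent {ℬ : Set (Set ι)}
    (hℬ : LocallyAlmostDisjoint ℬ) {x y : Set ι × Set ι} (hx : x.1 ∈ ℬ) (hy : y.1 ∈ ℬ)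
    (hne : x.1 ≠ y.1) (hxy : Coherent x y) :
    ∃ s : Set ι, s.Finite ∧ ∀ x' y' : Set ι × Set ι, x'.1 ∈ ℬ → y'.1 ∈ ℬ →
      AgreeOn s x'.1 x.1 → AgreeOn s x'.2 x.2 → AgreeOn s y'.1 y.1 → AgreeOn s y'.2 y.2 →
      Coherent x' y' := by
  obtain ⟨s, hs, hsℬ⟩ := hℬ _ hx _ hy hne
  refine ⟨s, hs, fun x' y' hx' hy' hx₁ hx₂ hy₁ hy₂ i hi => ?_⟩
  have his : i ∈ s := hsℬ _ hx' _ hy' hx₁ hy₁ hi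
  rw [hx₂ i his, hy₂ i his]
  exact hxy i ⟨(hx₁ i his).1 hi.1, (hy₁ i his).1 hi.2⟩

/-- The union `d` of the second components satisfies `d ∩ x.1 = x.2` for all `x ∈ W`, so
`F d` makes the images of any two members of `W` coherent up to a finite set. -/
lemma IsHomModFin.countable_of_pairwise_coherent [Countable κ] {F : Set ι → Set κ}
    (hF : IsHomModFin F) {W : Set (Set ι × Set ι)} (hsub : ∀ x ∈ W, x.2 ⊆ x.1)
    (hcoh : W.Pairwise Coherent)
    (hincoh : W.Pairwise fun x y => ¬Coherent (Prod.map F F x) (Prod.map F F y)) :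
    W.Countable := by
  classical
  let d : Set ι := ⋃ x ∈ W, x.2
  have hd : ∀ x ∈ W, AgreeOn x.1 x.2 d := by
    refine fun x hx i hix => ⟨fun h => mem_biUnion hx h, fun h => ?_⟩
    obtain ⟨y, hy, hiy⟩ := mem_iUnion₂.1 h
    rcases eq_or_ne x y with rfl | hxy
    exacts [hiy, (hcoh hx hy hxy i ⟨hix, hsub y hy hiy⟩).2 hiy]
  have hexc : ∀ x ∈ W, ∃ J : Finset κ, ∀ k ∉ J, k ∈ F x.1 → (k ∈ F x.2 ↔ k ∈ F d) := by
    intro x hx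
    have hfin := hF.mem_iff_of_agreeOn (hd x hx)
    exact ⟨hfin.toFinset, fun k hk => not_not.1 fun h => hk (hfin.mem_toFinset.2 h)⟩
  choose! J hJ using hexc
  refine MapsTo.countable_of_injOn (f := fun x => (J x, (J x).filter (· ∈ F x.2)))
    (mapsTo_univ _ _) (fun x hx y hy hxy => ?_) (to_countable univ)
  obtain ⟨hJxy, hFxy⟩ := Prod.mk_inj.1 hxy
  by_contra hne
  refine hincoh hx hy hne fun k ⟨hkx, hky⟩ => ?_
  by_cases hk : k ∈ J x
  · have hiff := Finset.ext_iff.1 hFxy k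
    rwa [← hJxy, Finset.mem_filter, Finset.mem_filter, and_iff_right hk, and_iff_right hk] at hiff
  · exact (hJ x hx k hk hkx).trans (hJ y hy k (hJxy ▸ hk) hky).symm

/-- The corresponding components of `x` and `y` have the same trace on `s`, and their images
under `F` have the same trace on `t`. -/
def SameTraces (F : Set ι → Set κ) (s : Set ι) (t : Set κ) (x y : Set ι × Set ι) : Prop :=
  (AgreeOn s x.1 y.1 ∧ AgreeOn s x.2 y.2) ∧ AgreeOn t (F x.1) (F y.1) ∧ AgreeOn t (F x.2) (F y.2)

lemma OCA.of_sameTraces (oca : OCA) {ι κ : Type} [Countable ι] [Countable κ] (F : Set ι → Set κ)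
    {X : Set (Set ι × Set ι)} {K : Set ι × Set ι → Set ι × Set ι → Prop}
    (hK : ∀ x ∈ X, ∀ y ∈ X, K x y → ∃ s t, s.Finite ∧ t.Finite ∧ ∀ x' ∈ X, ∀ y' ∈ X,
      SameTraces F s t x' x → SameTraces F s t y' y → K x' y')
    (hsymm : ∀ x y, K x y → K y x) (hirr : ∀ x, ¬K x x) :
    (∃ W ⊆ X, ¬W.Countable ∧ W.Pairwise K) ∨
      ∃ Y : ℕ → Set (Set ι × Set ι), ⋃ n, Y n = X ∧ ∀ n, (Y n).Pairwise fun x y => ¬K x y := by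
  let p : Bool × (ι ⊕ κ) → X → Prop := fun ⟨c, j⟩ x =>
    have z := if c then x.1.1 else x.1.2
    Sum.elim (· ∈ z) (· ∈ F z) j
  have hp (x y : X) (h : ∀ j, p j x ↔ p j y) : x = y := Subtype.ext <|
    Prod.ext (Set.ext fun i => h (true, .inl i)) (Set.ext fun i => h (false, .inl i))
  have hopen (x y : X) (hxy : K x y) : ∃ s : Set (Bool × (ι ⊕ κ)), s.Finite ∧ ∀ x' y' : X,
      (∀ j ∈ s, p j x' ↔ p j x) → (∀ j ∈ s, p j y' ↔ p j y) → K x' y' := by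
    obtain ⟨s, t, hs, ht, hst⟩ := hK x x.2 y y.2 hxy
    have hsame (x' x : X)
        (h : ∀ j ∈ (univ : Set Bool) ×ˢ (Sum.inl '' s ∪ Sum.inr '' t), p j x' ↔ p j x) :
        SameTraces F s t x' x :=
      have hinl (c : Bool) {i : ι} (hi : i ∈ s) := h (c, .inl i) ⟨trivial, .inl ⟨i, hi, rfl⟩⟩
      have hinr (c : Bool) {k : κ} (hk : k ∈ t) := h (c, .inr k) ⟨trivial, .inr ⟨k, hk, rfl⟩⟩
      ⟨⟨fun _ => hinl true, fun _ => hinl false⟩, fun _ => hinr true, fun _ => hinr false⟩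
    exact ⟨_, finite_univ.prod ((hs.image _).union (ht.image _)), fun x' y' hx hy =>
      hst x' x'.2 y' y'.2 (hsame x' x hx) (hsame y' y hy)⟩
  have hval : InjOn (Subtype.val : X → _) univ := Subtype.val_injective.injOn
  refine (oca.of_separating_predicates hp hopen (fun x y => hsymm x y) fun x => hirr x).imp ?_ ?_
  · rintro ⟨W, hWc, hW⟩
    exact ⟨Subtype.val '' W, Subtype.coe_image_subset X W,
      mt (countable_of_injective_of_countable_image (hval.mono (subset_univ W))) hWc,
      (hval.mono (subset_univ W)).pairwise_image.2 hW⟩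
  · rintro ⟨Y, hY, hYK⟩
    refine ⟨fun n => Subtype.val '' Y n, ?_, fun n =>
      (hval.mono (subset_univ _)).pairwise_image.2 (hYK n)⟩
    rw [← image_iUnion, hY, image_univ, Subtype.range_coe]

theorem OCA.exists_cover_coherent (oca : OCA) {ι κ : Type} [Countable ι] [Countable κ]
    {F : Set ι → Set κ} (hF : IsHomModFin F) {ℬ : Set (Set ι)} (hℬ : LocallyAlmostDisjoint ℬ) :
    ∃ Y : ℕ → Set (Set ι × Set ι), ⋃ n, Y n = markedSets ℬ ∧
      ∀ n, ∀ x ∈ Y n, ∀ y ∈ Y n, Coherent x y → Coherent (Prod.map F F x) (Prod.map F F y) := by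
  rcases oca.of_sameTraces F (X := markedSets ℬ)
    (K := fun x y => Coherent x y ∧ ¬Coherent (Prod.map F F x) (Prod.map F F y))
    (fun x hx y hy ⟨hxy, hincoh⟩ => by
      have hne : x.1 ≠ y.1 := fun h => hincoh (hxy.eq_of_fst_eq hx hy h ▸ .refl _ _)
      obtain ⟨s, hs, hcoh⟩ := hℬ.exists_forall_coherent hx.1 hy.1 hne hxy
      simp only [Coherent, AgreeOn, not_forall, Prod.map] at hincoh
      obtain ⟨k, ⟨hkx, hky⟩, hk⟩ := hincoh
      refine ⟨s, {k}, hs, finite_singleton k, fun x' hx' y' hy' hx hy =>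
        ⟨hcoh x' y' hx'.1 hy'.1 hx.1.1 hx.1.2 hy.1.1 hy.1.2, fun hcoh' => hk ?_⟩⟩
      rw [← hx.2.2 k rfl, ← hy.2.2 k rfl]
      exact hcoh' k ⟨(hx.2.1 k rfl).2 hkx, (hy.2.1 k rfl).2 hky⟩)
    (fun x y h => ⟨h.1.symm, fun h' => h.2 h'.symm⟩) (fun x h => h.2 (.refl _ _))
    with ⟨W, hWX, hWc, hW⟩ | ⟨Y, hY, hYK⟩
  · exact (hWc <| hF.countable_of_pairwise_coherent (fun x hx => (hWX hx).2)
      (hW.mono' fun _ _ h => h.1) (hW.mono' fun _ _ h => h.2)).elim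
  · refine ⟨Y, hY, fun n x hx y hy hxy => ?_⟩
    rcases eq_or_ne x y with rfl | hne
    · exact .refl _ _
    · exact not_not.1 fun hincoh => hYK n hx hy hne ⟨hxy, hincoh⟩

end OpenColouring

section Isolated

variable {F : Set ℕ → Set κ} {Y : Set (Set ℕ × Set ℕ)} {ℬ : Set (Set ℕ)} {B : Set ℕ}

/-- No element of `Y` with a first component other than `z.1` is coherent with `z ∈ Y` and has
an image under `F` whose domain contains `k`, although `k` lies in the domain of the image of
`z`. At such `z` coherence in `Y` gives no information on whether `k ∈ F z.2`. -/
def IsIsolatedAt (F : Set ℕ → Set κ) (Y : Set (Set ℕ × Set ℕ)) (k : κ) (z : Set ℕ × Set ℕ) :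
    Prop :=
  z ∈ Y ∧ k ∈ F z.1 ∧ ∀ x ∈ Y, x.1 ≠ z.1 → k ∈ F x.1 → ¬Coherent z x

/-- `s` is a limit of sets `b` for which `(B, b)` is isolated in `Y` at `k`. -/
def IsLimitOfIsolated (F : Set ℕ → Set κ) (Y : Set (Set ℕ × Set ℕ)) (k : κ) (s B : Set ℕ) :
    Prop :=
  ∀ m, ∃ b, AgreeOn (Iio m) b s ∧ IsIsolatedAt F Y k (B, b)

lemma subsingleton_setOf_isLimitOfIsolated (hℬ : ℬ.Pairwise fun B B' => (B ∩ B').Finite)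
    (k : κ) (s : Set ℕ) : {B ∈ ℬ | IsLimitOfIsolated F Y k s B}.Subsingleton := by
  rintro B ⟨hB, hlim⟩ B' ⟨hB', hlim'⟩
  by_contra hne
  obtain ⟨M, hM⟩ := (hℬ hB hB' hne).bddAbove
  obtain ⟨b, hbs, -, -, hiso⟩ := hlim (M + 1)
  obtain ⟨b', hbs', hbY', hkB', -⟩ := hlim' (M + 1)
  refine hiso _ hbY' (Ne.symm hne) hkB' fun i hi => ?_
  have hiM : i < M + 1 := Nat.lt_succ_of_le (hM hi)
  exact (hbs i hiM).trans (hbs' i hiM).symm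

lemma countable_setOf_isLimitOfIsolated [Countable κ]
    (hℬ : ℬ.Pairwise fun B B' => (B ∩ B').Finite) (Y : ℕ → Set (Set ℕ × Set ℕ)) :
    {B ∈ ℬ | ∃ n k, ∃ s : Finset ℕ, IsLimitOfIsolated F (Y n) k s B}.Countable := by
  refine (countable_iUnion fun i : ℕ × κ × Finset ℕ =>
    (subsingleton_setOf_isLimitOfIsolated (F := F) (Y := Y i.1) hℬ i.2.1 i.2.2).countable).mono ?_
  rintro B ⟨hB, n, k, s, hlim⟩
  exact mem_iUnion.2 ⟨(n, k, s), hB, hlim⟩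

lemma exists_halving_forall_not_isIsolatedAt [Countable κ] {Y : ℕ → Set (Set ℕ × Set ℕ)}
    (hB : ∀ n k, ∀ s : Finset ℕ, ¬IsLimitOfIsolated F (Y n) k s B) :
    ∃ S, ∃ w ⊆ B, ∀ b ⊆ B, AgreeOn S b w ∨ AgreeOn Sᶜ b w →
      ∀ n k, ¬IsIsolatedAt F (Y n) k (B, b) := by
  classical
  obtain ⟨S, w, w', hwB, hS⟩ := exists_halving_pair (fun i a _ => a → i ∈ B)
    (fun (j : ℕ × κ) b _ => ¬IsIsolatedAt F (Y j.1) j.2 (B, b))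
    (fun ⟨n, k⟩ x y m hx => by
      have hlim := hB n k ((Finset.range m).filter (· ∈ x))
      simp only [IsLimitOfIsolated, not_forall, not_exists, not_and] at hlim
      obtain ⟨m', hm'⟩ := hlim
      refine ⟨_, y, fun i hi => hx i (Finset.mem_filter.1 hi).2, fun i hi => ?_, .refl _ _, m',
        fun v _ _ hv _ => hm' v hv⟩
      rw [Finset.mem_coe, Finset.mem_filter, Finset.mem_range, and_iff_right (mem_Iio.1 hi)])
    ⟨∅, ∅, fun _ h => h.elim⟩
  exact ⟨S, w, hwB, fun b hb hbw n k => hS (n, k) b w' hb <|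
    hbw.imp (fun h => ⟨h, .refl _ _⟩) fun h => ⟨h, .refl _ _⟩⟩

lemma cantorContinuousOn_inter_of_coherent (hℬ : ℬ.Pairwise fun B B' => (B ∩ B').Finite)
    (hB : B ∈ ℬ) (hY : Y ⊆ markedSets ℬ)
    (hcoh : ∀ x ∈ Y, ∀ y ∈ Y, Coherent x y → Coherent (Prod.map F F x) (Prod.map F F y)) :
    CantorContinuousOn (fun b => F b ∩ F B)
      {b | (B, b) ∈ Y ∧ ∀ k, ¬IsIsolatedAt F Y k (B, b)} := by
  rintro b ⟨hbY, hiso⟩ k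
  by_cases hkB : k ∈ F B
  · obtain ⟨x, hxY, hxB, hkx, hbx⟩ : ∃ x ∈ Y, x.1 ≠ B ∧ k ∈ F x.1 ∧ Coherent (B, b) x := by
      by_contra! h
      exact hiso k ⟨hbY, hkB, h⟩
    obtain ⟨M, hM⟩ := (hℬ hB (hY hxY).1 hxB.symm).bddAbove
    refine ⟨M + 1, fun b' ⟨hbY', _⟩ hag => ?_⟩
    have hbx' : Coherent (B, b') x := fun i hi =>
      (hag i (Nat.lt_succ_of_le (hM hi))).trans (hbx i hi)
    rw [mem_inter_iff, mem_inter_iff, and_iff_left hkB, and_iff_left hkB]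
    exact (hcoh _ hbY' x hxY hbx' k ⟨hkB, hkx⟩).trans (hcoh _ hbY x hxY hbx k ⟨hkB, hkx⟩).symm
  · exact ⟨0, fun b' _ _ => iff_of_false (fun h => hkB h.2) fun h => hkB h.2⟩

lemma SimpleOn.of_inter_const (hF : IsHomModFin F) {A : Set ℕ} (hAB : A ⊆ B)
    (h : SimpleOn (fun b => F b ∩ F B) A) : SimpleOn F A := by
  obtain ⟨D, H, hHA, hDH⟩ := h
  refine ⟨D, H, hHA, fun x hx => ?_⟩
  filter_upwards [hDH x hx, hF.mono (hx.trans hAB)] with k hk hmono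
  rw [← hk]
  exact ⟨fun h => ⟨h, hmono h⟩, And.left⟩

theorem finite_setOf_not_simpleOn_of_cover [Countable κ] (hF : IsHomModFin F)
    {Y : ℕ → Set (Set ℕ × Set ℕ)} (hcov : ∀ b ⊆ B, ∃ n, (B, b) ∈ Y n)
    (hcont : ∀ n, CantorContinuousOn (fun b => F b ∩ F B)
      {b | (B, b) ∈ Y n ∧ ∀ k, ¬IsIsolatedAt F (Y n) k (B, b)})
    (hlim : ∀ n k, ∀ s : Finset ℕ, ¬IsLimitOfIsolated F (Y n) k s B)
    {𝒞 : Set (Set ℕ)} (h𝒞B : ∀ A ∈ 𝒞, A ⊆ B) (h𝒞 : 𝒞.Pairwise fun A A' => (A ∩ A').Finite) :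
    {A ∈ 𝒞 | ¬SimpleOn F A}.Finite := by
  obtain ⟨S, w, hwB, hS⟩ := exists_halving_forall_not_isIsolatedAt hlim
  have hhalf (T : Set ℕ) (hT : ∀ b ⊆ B, AgreeOn T b w → AgreeOn S b w ∨ AgreeOn Sᶜ b w) :
      ∀ᶠ A : 𝒞 in cofinite, SimpleOn (fun b => F b ∩ F B) (A \ (Bᶜ ∪ T)) := by
    refine eventually_simpleOn_sdiff_of_cover (p := w) (hF.inter_const _)
      (fun A A' hne => h𝒞 A.2 A'.2 (Subtype.coe_injective.ne hne)) hcont fun b hbw => ?_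
    have hbB : b ⊆ B := fun i hi => by_contra fun hiB => hiB (hwB ((hbw i (.inl hiB)).1 hi))
    obtain ⟨n, hn⟩ := hcov b hbB
    exact ⟨n, hn, hS b hbB (hT b hbB (hbw.mono subset_union_right)) n⟩
  have hsimple : ∀ᶠ A : 𝒞 in cofinite, SimpleOn F A := by
    filter_upwards [hhalf S fun _ _ => .inl, hhalf Sᶜ fun _ _ => .inr] with A hA hA'
    refine SimpleOn.of_inter_const hF (h𝒞B A A.2)
      ((hA.union (hF.inter_const _) hA').mono fun i hi => ?_)
    by_cases hiS : i ∈ S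
    · exact .inr ⟨hi, fun h => h.elim (· (h𝒞B A A.2 hi)) (· hiS)⟩
    · exact .inl ⟨hi, fun h => h.elim (· (h𝒞B A A.2 hi)) hiS⟩
  refine (Finite.image Subtype.val hsimple).subset ?_
  rintro A ⟨hA, hns⟩
  exact ⟨⟨A, hA⟩, hns, rfl⟩

theorem OCA.countable_setOf_infinite_not_simpleOn (oca : OCA) {κ : Type} [Countable κ]
    {F : Set ℕ → Set κ} (hF : IsHomModFin F) (hℬ : LocallyAlmostDisjoint ℬ) :
    {B ∈ ℬ | ∃ 𝒞 : Set (Set ℕ), (∀ A ∈ 𝒞, A ⊆ B) ∧ (𝒞.Pairwise fun A A' => (A ∩ A').Finite) ∧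
      {A ∈ 𝒞 | ¬SimpleOn F A}.Infinite}.Countable := by
  obtain ⟨Y, hY, hcoh⟩ := oca.exists_cover_coherent hF hℬ
  have had : ℬ.Pairwise fun B B' => (B ∩ B').Finite := fun B hB B' hB' => hℬ.finite_inter hB hB'
  refine (countable_setOf_isLimitOfIsolated (F := F) had Y).mono ?_
  rintro B ⟨hB, 𝒞, h𝒞B, h𝒞, hinf⟩
  refine ⟨hB, ?_⟩
  by_contra! hlim
  refine hinf (finite_setOf_not_simpleOn_of_cover hF (fun b hb => ?_)
    (fun n => cantorContinuousOn_inter_of_coherent had hB ?_ (hcoh n)) hlim h𝒞B h𝒞)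
  · exact mem_iUnion.1 (hY ▸ ⟨hB, hb⟩ : (B, b) ∈ ⋃ n, Y n)
  · exact hY ▸ subset_iUnion Y n

end Isolated

section CompactSets

open Topology

variable {Z : Type*} [TopologicalSpace Z] [T1Space Z] [SecondCountableTopology Z] {X : Set Z}

lemma exists_infinite_countable_isCompact_subset (hX : ¬X.Countable) :
    ∃ K ⊆ X, K.Infinite ∧ K.Countable ∧ IsCompact K := by
  obtain ⟨x, hx, hacc⟩ : ∃ x ∈ X, AccPt x (𝓟 X) := by
    by_contra! h
    have := discreteTopology_of_noAccPts h
    exact hX (countable_coe_iff.1 (TopologicalSpace.separableSpace_iff_countable.1 inferInstance))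
  obtain ⟨u, hux, hu⟩ := exists_seq_forall_of_frequently (accPt_iff_frequently.1 hacc)
  have hrange : (range u).Infinite := .of_accPt <|
    accPt_iff_frequently.2 <| hux.frequently <| .of_forall fun n => ⟨(hu n).1, n, rfl⟩
  refine ⟨insert x (range u), insert_subset hx (range_subset_iff.2 fun n => (hu n).2),
    hrange.mono (subset_insert _ _), (countable_range u).insert x, hux.isCompact_insert_range⟩

lemma exists_uncountable_pairwiseDisjoint_isCompact (hX : ¬X.Countable) :
    ∃ 𝒦 : Set (Set Z), ¬𝒦.Countable ∧ 𝒦.PairwiseDisjoint id ∧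
      ∀ K ∈ 𝒦, K ⊆ X ∧ K.Infinite ∧ IsCompact K := by
  obtain ⟨𝒦, h𝒦⟩ := zorn_subset {𝒦 : Set (Set Z) | 𝒦.PairwiseDisjoint id ∧
    ∀ K ∈ 𝒦, K ⊆ X ∧ K.Infinite ∧ K.Countable ∧ IsCompact K} fun c hc hchain =>
      ⟨⋃₀ c, ⟨(pairwiseDisjoint_sUnion hchain.directedOn).2 fun s hs => (hc hs).1,
        fun K ⟨s, hs, hK⟩ => (hc hs).2 K hK⟩, fun s hs => subset_sUnion_of_mem hs⟩
  obtain ⟨hdisj, hprop⟩ := h𝒦.prop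
  refine ⟨𝒦, fun hcount => ?_, hdisj, fun K hK =>
    ⟨(hprop K hK).1, (hprop K hK).2.1, (hprop K hK).2.2.2⟩⟩
  have hunion : (⋃₀ 𝒦).Countable := hcount.sUnion fun K hK => (hprop K hK).2.2.1
  have hrest : ¬(X \ ⋃₀ 𝒦).Countable := fun h => hX ((h.union hunion).mono (subset_sdiff_union X _))
  obtain ⟨K, hKX, hKinf, hKcount, hKcomp⟩ := exists_infinite_countable_isCompact_subset hrest
  have hK : K ∈ 𝒦 := by
    refine h𝒦.le_of_ge (y := insert K 𝒦) ⟨?_, ?_⟩ (subset_insert _ _) (mem_insert _ _)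
    · exact hdisj.insert fun L hL _ =>
        disjoint_left.2 fun y hy hyL => (hKX hy).2 ⟨L, hL, hyL⟩
    · exact forall_mem_insert.2 ⟨⟨hKX.trans sdiff_subset, hKinf, hKcount, hKcomp⟩, hprop⟩
  obtain ⟨y, hy⟩ := hKinf.nonempty
  exact (hKX hy).2 ⟨K, hK, hy⟩

end CompactSets

section Trees

variable {π : ℕ ≃ List Bool} {K K' : Set (ℕ → Bool)}

/-- The tree of finite initial segments of elements of `K`, as a set of codes under `π`. -/
def treeOf (π : ℕ ≃ List Bool) (K : Set (ℕ → Bool)) : Set ℕ :=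
  {i | ∃ y ∈ K, ∃ k : ℕ, π i = List.ofFn fun j : Fin k => y j}

lemma mem_treeOf_iff {i : ℕ} :
    i ∈ treeOf π K ↔ ∃ y ∈ K, π i = List.ofFn fun j : Fin (π i).length => y j := by
  refine ⟨fun ⟨y, hy, k, hk⟩ => ⟨y, hy, ?_⟩, fun ⟨y, hy, h⟩ => ⟨y, hy, _, h⟩⟩
  obtain rfl : (π i).length = k := by rw [hk, List.length_ofFn]
  exact hk

lemma treeOf_mono (h : K ⊆ K') : treeOf π K ⊆ treeOf π K' :=
  fun _ ⟨y, hy, hk⟩ => ⟨y, h hy, hk⟩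

lemma finite_setOf_length_le (π : ℕ ≃ List Bool) (N : ℕ) : {i | (π i).length ≤ N}.Finite :=
  (List.finite_length_le Bool N).preimage π.injective.injOn

lemma exists_forall_exists_lt_ne (hK : IsCompact K) (hK' : IsCompact K')
    (hdisj : Disjoint K K') : ∃ N, ∀ y ∈ K, ∀ z ∈ K', ∃ j < N, y j ≠ z j := by
  have hopen (j : ℕ) : IsOpen {q : (ℕ → Bool) × (ℕ → Bool) | q.1 j ≠ q.2 j} :=
    isOpen_ne_fun (by fun_prop) (by fun_prop)
  have hcover : K ×ˢ K' ⊆ ⋃ N, ⋃ j < N, {q : (ℕ → Bool) × (ℕ → Bool) | q.1 j ≠ q.2 j} := by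
    rintro ⟨y, z⟩ ⟨hy, hz⟩
    obtain ⟨j, hj⟩ := Function.ne_iff.1 (disjoint_iff_forall_ne.1 hdisj hy hz)
    exact mem_iUnion.2 ⟨j + 1, mem_biUnion j.lt_succ_self hj⟩
  obtain ⟨N, hN⟩ := (hK.prod hK').elim_directed_cover _
    (fun N => isOpen_biUnion fun j _ => hopen j) hcover
    (Monotone.directed_le fun N N' h =>
      biUnion_mono (fun j hj => lt_of_lt_of_le hj h) fun _ _ => le_rfl)
  refine ⟨N, fun y hy z hz => ?_⟩
  obtain ⟨j, hj, hne⟩ := mem_iUnion₂.1 (hN (mk_mem_prod hy hz))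
  exact ⟨j, hj, hne⟩

lemma exists_treeOf_inter_treeOf_subset (hK : IsCompact K) (hK' : IsCompact K')
    (hdisj : Disjoint K K') :
    ∃ N, treeOf π K ∩ treeOf π K' ⊆ {i | (π i).length < N} := by
  obtain ⟨N, hN⟩ := exists_forall_exists_lt_ne hK hK' hdisj
  refine ⟨N, fun i ⟨hi, hi'⟩ => ?_⟩
  obtain ⟨y, hy, hyi⟩ := mem_treeOf_iff.1 hi
  obtain ⟨z, hz, hzi⟩ := mem_treeOf_iff.1 hi'
  obtain ⟨j, hj, hne⟩ := hN y hy z hz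
  by_contra hlen
  exact hne (congrFun (List.ofFn_injective (hyi.symm.trans hzi)) ⟨j, hj.trans_le (not_lt.1 hlen)⟩)

lemma finite_treeOf_inter_treeOf (hK : IsCompact K) (hK' : IsCompact K')
    (hdisj : Disjoint K K') : (treeOf π K ∩ treeOf π K').Finite := by
  obtain ⟨N, hN⟩ := exists_treeOf_inter_treeOf_subset (π := π) hK hK' hdisj
  exact (finite_setOf_length_le π N).subset
    (hN.trans (ofPred_subset_ofPred.2 fun _ => le_of_lt))

lemma infinite_treeOf (hK : K.Nonempty) : (treeOf π K).Infinite := by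
  obtain ⟨y, hy⟩ := hK
  refine infinite_of_injective_forall_mem
    (f := fun n : ℕ => π.symm (List.ofFn fun j : Fin n => y j)) (fun m n hmn => ?_)
    fun n => ⟨y, hy, n, π.apply_symm_apply _⟩
  simpa only [List.length_ofFn] using congrArg List.length (π.symm.injective hmn)

lemma injOn_treeOf {𝒦 : Set (Set (ℕ → Bool))} (hdisj : 𝒦.PairwiseDisjoint id)
    (hcomp : ∀ K ∈ 𝒦, IsCompact K) (hne : ∀ K ∈ 𝒦, K.Nonempty) : InjOn (treeOf π) 𝒦 := by
  intro K hK K' hK' heq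
  by_contra h
  refine infinite_treeOf (π := π) (hne K hK) ?_
  rw [← inter_self (treeOf π K)]
  nth_rw 2 [heq]
  exact finite_treeOf_inter_treeOf (hcomp K hK) (hcomp K' hK') (hdisj hK hK' h)

lemma take_mem_treeOf {i : ℕ} (hi : i ∈ treeOf π K) (N : ℕ) :
    π.symm ((π i).take N) ∈ treeOf π K := by
  obtain ⟨y, hy, k, hk⟩ := hi
  refine ⟨y, hy, min N k, ?_⟩
  rw [π.apply_symm_apply, hk]
  exact List.ext_getElem (by simp) (by simp)

lemma locallyAlmostDisjoint_image_treeOf {𝒦 : Set (Set (ℕ → Bool))}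
    (hdisj : 𝒦.PairwiseDisjoint id) (hcomp : ∀ K ∈ 𝒦, IsCompact K) :
    LocallyAlmostDisjoint (treeOf π '' 𝒦) := by
  rintro _ ⟨K, hK, rfl⟩ _ ⟨K', hK', rfl⟩ hne
  obtain ⟨N, hN⟩ := exists_treeOf_inter_treeOf_subset (π := π) (hcomp K hK) (hcomp K' hK')
    (hdisj hK hK' fun h => hne (h ▸ rfl))
  refine ⟨_, finite_setOf_length_le π N, ?_⟩
  rintro _ ⟨L, -, rfl⟩ _ ⟨L', -, rfl⟩ hLK hLK' i ⟨hi, hi'⟩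
  by_contra hlen
  have htake : (π (π.symm ((π i).take N))).length = N := by
    rw [π.apply_symm_apply, List.length_take, min_eq_left (not_le.1 hlen).le]
  exact (hN ⟨(hLK _ htake.le).1 (take_mem_treeOf hi N),
    (hLK' _ htake.le).1 (take_mem_treeOf hi' N)⟩).ne htake

end Trees

section Liftings

variable {α : Type} {φ : Set ℕ → PFin α} {F : Set ℕ → Set α}

lemma PFin.mk_eq_mk_iff {x y : Set α} :
    PFin.mk x = PFin.mk y ↔ ∀ᶠ k in cofinite, (k ∈ x ↔ k ∈ y) := by
  refine Quotient.eq.trans (iff_of_eq (congrArg Set.Finite (Set.ext fun k => ?_)))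
  change k ∈ symmDiff x y ↔ ¬(k ∈ x ↔ k ∈ y)
  rw [mem_symmDiff]
  tauto

lemma exists_isLiftingPN (φ : Set ℕ → PFin α) : ∃ F, IsLiftingPN φ F :=
  ⟨fun x => (φ x).out, fun x => (φ x).out_eq⟩

lemma IsLiftingPN.isHomModFin (hF : IsLiftingPN φ F)
    (map_sup : ∀ a b, φ (a ∪ b) = PFin.sup (φ a) (φ b))
    (map_inf : ∀ a b, φ (a ∩ b) = PFin.inf (φ a) (φ b)) (map_bot : φ ∅ = PFin.bot) :
    IsHomModFin F where
  inter a b := PFin.mk_eq_mk_iff.1 <| by rw [hF, map_inf, ← hF a, ← hF b]; rfl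
  union a b := PFin.mk_eq_mk_iff.1 <| by rw [hF, map_sup, ← hF a, ← hF b]; rfl
  empty := (PFin.mk_eq_mk_iff.1 ((hF ∅).trans map_bot)).mono fun _ hk => hk.1

lemma IsLiftingPN.simpleOn_iff (hF : IsLiftingPN φ F) {A : Set ℕ} :
    SimpleOn F A ↔ ∃ (D : Set α) (H : α → ℕ), (∀ p ∈ D, H p ∈ A) ∧
      ∀ x ⊆ A, φ x = PFin.mk {p ∈ D | H p ∈ x} := by
  simp only [← hF _, PFin.mk_eq_mk_iff]
  rfl

end Liftings

section NeatFamilies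

variable {𝒜 : Set (Set ℕ)} {π : ℕ ≃ List Bool} {br : Set ℕ → ℕ → Bool}

lemma pairwise_finite_inter_of_neat (hinj : InjOn br 𝒜) (hbr : ∀ A ∈ 𝒜, A ⊆ treeOf π {br A}) :
    𝒜.Pairwise fun A A' => (A ∩ A').Finite := fun A hA A' hA' hne =>
  (finite_treeOf_inter_treeOf isCompact_singleton isCompact_singleton
    (disjoint_singleton.2 (hinj.ne hA hA' hne))).subset (inter_subset_inter (hbr A hA) (hbr A' hA'))

theorem OCA.countable_setOf_not_simpleOn_of_neat (oca : OCA) {κ : Type} [Countable κ]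
    {F : Set ℕ → Set κ} (hF : IsHomModFin F) (hinj : InjOn br 𝒜)
    (hbr : ∀ A ∈ 𝒜, A ⊆ treeOf π {br A}) : {A ∈ 𝒜 | ¬SimpleOn F A}.Countable := by
  set Bad := {A ∈ 𝒜 | ¬SimpleOn F A}
  have hBad : Bad ⊆ 𝒜 := sep_subset _ _
  by_contra hunc
  have hbranches : ¬(br '' Bad).Countable :=
    mt (countable_of_injective_of_countable_image (hinj.mono hBad)) hunc
  obtain ⟨𝒦, h𝒦, hdisj, hprop⟩ := exists_uncountable_pairwiseDisjoint_isCompact hbranches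
  have htrees : ¬(treeOf π '' 𝒦).Countable :=
    mt (countable_of_injective_of_countable_image
      (injOn_treeOf hdisj (fun K hK => (hprop K hK).2.2) fun K hK => (hprop K hK).2.1.nonempty)) h𝒦
  have hexc := oca.countable_setOf_infinite_not_simpleOn hF
    (locallyAlmostDisjoint_image_treeOf (π := π) hdisj fun K hK => (hprop K hK).2.2)
  refine htrees (hexc.mono ?_)
  rintro _ ⟨K, hK, rfl⟩
  refine ⟨mem_image_of_mem _ hK, {A ∈ Bad | br A ∈ K}, fun A ⟨hA, hAK⟩ => ?_, ?_, ?_⟩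
  · exact (hbr A (hBad hA)).trans (treeOf_mono (singleton_subset_iff.2 hAK))
  · exact (pairwise_finite_inter_of_neat hinj hbr).mono ((sep_subset _ _).trans hBad)
  · have himage : K ⊆ br '' {A ∈ {A ∈ Bad | br A ∈ K} | ¬SimpleOn F A} := by
      intro y hy
      obtain ⟨A, hA, rfl⟩ := (hprop K hK).1 hy
      exact ⟨A, ⟨⟨hA, hy⟩, hA.2⟩, rfl⟩
    exact ((hprop K hK).2.1.mono himage).of_image br

end NeatFamilies

theorem embedding_powN_simple_on_neat_family_general (oca : OCA) {α : Type} [Countable α]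
    {φ : Set ℕ → PFin α} (map_sup : ∀ a b, φ (a ∪ b) = PFin.sup (φ a) (φ b))
    (map_inf : ∀ a b, φ (a ∩ b) = PFin.inf (φ a) (φ b)) (map_bot : φ ∅ = PFin.bot)
    {𝒜 : Set (Set ℕ)} {π : ℕ ≃ List Bool} {br : Set ℕ → ℕ → Bool} (hinj : InjOn br 𝒜)
    (hbr : ∀ A ∈ 𝒜, ∀ n ∈ A, ∃ k : ℕ, π n = List.ofFn fun i : Fin k => br A i) :
    {A ∈ 𝒜 | ¬∃ (D : Set α) (H : α → ℕ), (∀ p ∈ D, H p ∈ A) ∧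
      ∀ x ⊆ A, φ x = PFin.mk {p ∈ D | H p ∈ x}}.Countable := by
  obtain ⟨F, hF⟩ := exists_isLiftingPN φ
  simp only [← hF.simpleOn_iff]
  exact oca.countable_setOf_not_simpleOn_of_neat (hF.isHomModFin map_sup map_inf map_bot) hinj
    fun A hA n hn => ⟨br A, rfl, hbr A hA n hn⟩

/-- Theorem on embeddings of `P(ℕ)` into `P(ℕ)/fin`: assume OCA; let `φ` be an
embedding of `P(ℕ)` into `P(ℕ)/fin` and `𝒜` a neat almost disjoint family of size `ℵ₁`.
Then for all but countably many `A ∈ 𝒜` there are `D ⊆ ℕ` and `H : D → A` with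
`φ(x) = [H⁻¹[x]]` for all `x ⊆ A`. -/
theorem embedding_powN_simple_on_neat_family (oca : OCA)
    (φ : Set ℕ → PFin ℕ) (hφ : IsEmbeddingPN φ)
    (𝒜 : Set (Set ℕ))
    (hcard : Cardinal.mk 𝒜 = Cardinal.aleph 1)
    (hinf : ∀ A ∈ 𝒜, A.Infinite)
    (had : ∀ A ∈ 𝒜, ∀ B ∈ 𝒜, A ≠ B → (A ∩ B).Finite)
    (hneat : ∃ (π : ℕ ≃ List Bool) (br : Set ℕ → ℕ → Bool),
        Set.InjOn br 𝒜 ∧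
        ∀ A ∈ 𝒜, ∀ n ∈ A, ∃ k : ℕ, π n = List.ofFn fun i : Fin k => br A i.1) :
    {A ∈ 𝒜 | ¬ ∃ (D : Set ℕ) (H : ℕ → ℕ), (∀ p ∈ D, H p ∈ A) ∧
        ∀ x ⊆ A, φ x = PFin.mk {p ∈ D | H p ∈ x}}.Countable := by
  obtain ⟨π, br, hinj, hbr⟩ := hneat
  exact embedding_powN_simple_on_neat_family_general oca hφ.map_sup hφ.map_inf hφ.map_bot hinj hbr

end Paper
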